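/- For any teleportation assemblage {σ_{a|ω_x}} arising from a shared state ρ^{AB}, a POVM {M_a^{VA}} and input states {ω_x}, the generalized teleportation robustness is bounded by the generalized entanglement robustness of the shared state: τ_gen({σ_{a|ω_x}}) ≤ ε_gen(ρ^{AB}). -/

import Mathlib

open Matrix ComplexOrder
open scoped Kronecker

namespace Tele

noncomputable def ptrace₁ {V B : Type*} [Fintype V]
    (M : Matrix (V × B) (V × B) ℂ) : Matrix B B ℂ :=
  Matrix.of fun b b' => ∑ v, M (v, b) (v, b')

noncomputable def ptrace₂ {V B : Type*} [Fintype B]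
    (M : Matrix (V × B) (V × B) ℂ) : Matrix V V ℂ :=
  Matrix.of fun v v' => ∑ b, M (v, b) (v', b)

noncomputable def ptraceMid {V A B : Type*} [Fintype A]
    (M : Matrix (V × A × B) (V × A × B) ℂ) : Matrix (V × B) (V × B) ℂ :=
  Matrix.of fun p q => ∑ a, M (p.1, a, p.2) (q.1, a, q.2)

noncomputable def ptraceVA {V A B : Type*} [Fintype V] [Fintype A]
    (M : Matrix (V × A × B) (V × A × B) ℂ) : Matrix B B ℂ :=
  Matrix.of fun b b' => ∑ v, ∑ a, M (v, a, b) (v, a, b')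

noncomputable def ptraceV₁A {V V₁ A B : Type*} [Fintype V₁] [Fintype A]
    (M : Matrix (V × V₁ × A × B) (V × V₁ × A × B) ℂ) : Matrix (V × B) (V × B) ℂ :=
  Matrix.of fun p q => ∑ v₁, ∑ a, M (p.1, v₁, a, p.2) (q.1, v₁, a, q.2)

def ptranspose₁ {V B : Type*} (M : Matrix (V × B) (V × B) ℂ) : Matrix (V × B) (V × B) ℂ :=
  Matrix.of fun p q => M (q.1, p.2) (p.1, q.2)

def ptranspose₂ {V B : Type*} (M : Matrix (V × B) (V × B) ℂ) : Matrix (V × B) (V × B) ℂ :=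
  Matrix.of fun p q => M (p.1, q.2) (q.1, p.2)

def Separable {V B : Type*} [Fintype V] [Fintype B]
    (M : Matrix (V × B) (V × B) ℂ) : Prop :=
  ∃ (n : ℕ) (τ : Fin n → Matrix V V ℂ) (χ : Fin n → Matrix B B ℂ),
    (∀ i, (τ i).PosSemidef) ∧ (∀ i, (χ i).PosSemidef) ∧ M = ∑ i, τ i ⊗ₖ χ i

def IsState {V : Type*} [Fintype V] (ρ : Matrix V V ℂ) : Prop :=
  ρ.PosSemidef ∧ ρ.trace = 1

noncomputable def maxEnt (d : ℕ) : Matrix (Fin d × Fin d) (Fin d × Fin d) ℂ :=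
  Matrix.of fun p q => if p.1 = p.2 ∧ q.1 = q.2 then (d : ℂ)⁻¹ else 0

noncomputable def chanOp {V A B : Type*} [Fintype V] [Fintype A] [Fintype B]
    [DecidableEq V] [DecidableEq B]
    (M : Matrix (V × A) (V × A) ℂ) (ρ : Matrix (A × B) (A × B) ℂ) :
    Matrix (V × B) (V × B) ℂ :=
  ptraceMid ((Matrix.reindex (Equiv.prodAssoc V A B) (Equiv.prodAssoc V A B)
      (M ⊗ₖ (1 : Matrix B B ℂ))) * ((1 : Matrix V V ℂ) ⊗ₖ ρ))

noncomputable def teleA {V A B : Type*} [Fintype V] [Fintype A] [Fintype B] [DecidableEq B]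
    (M : Matrix (V × A) (V × A) ℂ) (ρ : Matrix (A × B) (A × B) ℂ) (ω : Matrix V V ℂ) :
    Matrix B B ℂ :=
  ptraceVA ((Matrix.reindex (Equiv.prodAssoc V A B) (Equiv.prodAssoc V A B)
      (M ⊗ₖ (1 : Matrix B B ℂ))) * (ω ⊗ₖ ρ))

noncomputable def margOp {V A : Type*} [Fintype V] [Fintype A] [DecidableEq V]
    (M : Matrix (V × A) (V × A) ℂ) (ρA : Matrix A A ℂ) : Matrix V V ℂ :=
  ptrace₂ (M * ((1 : Matrix V V ℂ) ⊗ₖ ρA))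

noncomputable def piOp {A B : Type*} [Fintype A] [Fintype B] [DecidableEq B]
    (χ : Matrix A A ℂ) (ρ : Matrix (A × B) (A × B) ℂ) : Matrix B B ℂ :=
  ptrace₁ ((χ ⊗ₖ (1 : Matrix B B ℂ)) * ρ)

def TomoComplete {V X : Type*} [Fintype V] (ω : X → Matrix V V ℂ) : Prop :=
  ∀ H : Matrix V V ℂ, H.IsHermitian → H ∈ Submodule.span ℝ (Set.range ω)

noncomputable def shiftX (d : ℕ) : Matrix (Fin d) (Fin d) ℂ :=
  Matrix.of fun i j => if (i : ℕ) = ((j : ℕ) + 1) % d then 1 else 0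

noncomputable def clockZ (d : ℕ) : Matrix (Fin d) (Fin d) ℂ :=
  Matrix.of fun i j =>
    if i = j then Complex.exp (2 * (Real.pi : ℂ) * Complex.I * ((i : ℕ) : ℂ) / (d : ℂ)) else 0

noncomputable def HW (d : ℕ) (a : Fin d × Fin d) : Matrix (Fin d) (Fin d) ℂ :=
  shiftX d ^ (a.1 : ℕ) * clockZ d ^ (a.2 : ℕ)

noncomputable def bellPOVM (d : ℕ) (a : Fin d × Fin d) :
    Matrix (Fin d × Fin d) (Fin d × Fin d) ℂ :=
  (HW d a ⊗ₖ (1 : Matrix (Fin d) (Fin d) ℂ)) * maxEnt d *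
    ((HW d a)ᴴ ⊗ₖ (1 : Matrix (Fin d) (Fin d) ℂ))

noncomputable def negativity {A B : Type*} [Fintype A] [Fintype B]
    (ρ : Matrix (A × B) (A × B) ℂ) : ℝ :=
  sInf {t : ℝ | ∃ ρp ρm : Matrix (A × B) (A × B) ℂ,
    ρ = ρp - ρm ∧ (ptranspose₁ ρp).PosSemidef ∧ (ptranspose₁ ρm).PosSemidef ∧
    t = (ρm.trace).re}

noncomputable def epsGen {A B : Type*} [Fintype A] [Fintype B]
    (ρ : Matrix (A × B) (A × B) ℂ) : ℝ :=
  sInf {r : ℝ | 0 ≤ r ∧ ∃ ρs : Matrix (A × B) (A × B) ℂ, IsState ρs ∧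
    Separable ((((1 + r : ℝ) : ℂ))⁻¹ • (ρ + ((r : ℝ) : ℂ) • ρs))}

noncomputable def epsSep {A B : Type*} [Fintype A] [Fintype B]
    (ρ : Matrix (A × B) (A × B) ℂ) : ℝ :=
  sInf {r : ℝ | 0 ≤ r ∧ ∃ ρs : Matrix (A × B) (A × B) ℂ, IsState ρs ∧ Separable ρs ∧
    Separable ((((1 + r : ℝ) : ℂ))⁻¹ • (ρ + ((r : ℝ) : ℂ) • ρs))}

noncomputable def epsR {A B : Type*} [Fintype A] [Fintype B] [DecidableEq A] [DecidableEq B]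
    (ρ : Matrix (A × B) (A × B) ℂ) : ℝ :=
  sInf {r : ℝ | 0 ≤ r ∧
    Separable ((((1 + r : ℝ) : ℂ))⁻¹ •
      (ρ + ((r : ℝ) : ℂ) • ((Fintype.card (A × B) : ℂ)⁻¹ • (1 : Matrix (A × B) (A × B) ℂ))))}

noncomputable def epsBSA {A B : Type*} [Fintype A] [Fintype B]
    (ρ : Matrix (A × B) (A × B) ℂ) : ℝ :=
  sInf {p : ℝ | 0 ≤ p ∧ p ≤ 1 ∧ ∃ ρs σS : Matrix (A × B) (A × B) ℂ,
    IsState ρs ∧ IsState σS ∧ Separable σS ∧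
    ρ = ((p : ℝ) : ℂ) • ρs + (((1 - p : ℝ)) : ℂ) • σS}

noncomputable def tauGen {V B X ι : Type*} [Fintype V] [Fintype B] [Fintype ι]
    [DecidableEq V] [DecidableEq B]
    (ω : X → Matrix V V ℂ) (σ : ι → X → Matrix B B ℂ) : ℝ :=
  sInf {r : ℝ | 0 ≤ r ∧ ∃ (m : ℕ) (ρs : Matrix (Fin m × B) (Fin m × B) ℂ)
      (N : ι → Matrix (V × Fin m) (V × Fin m) ℂ) (Ms : ι → Matrix (V × B) (V × B) ℂ),
      IsState ρs ∧ (∀ a, (N a).PosSemidef) ∧ ((∑ a, N a) = 1) ∧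
      (∀ a, (Ms a).PosSemidef ∧ Separable (Ms a)) ∧
      (∀ a x, (((1 + r : ℝ) : ℂ))⁻¹ • (σ a x + ((r : ℝ) : ℂ) • teleA (N a) ρs (ω x)) =
        ptrace₁ (Ms a * (ω x ⊗ₖ (1 : Matrix B B ℂ)))) ∧
      (∀ x, (∑ a, Ms a) = (1 : Matrix V V ℂ) ⊗ₖ
        ((((1 + r : ℝ) : ℂ))⁻¹ •
          ((∑ a, σ a x) + ((r : ℝ) : ℂ) • ∑ a, teleA (N a) ρs (ω x))))}

noncomputable def tauCl {V B X ι : Type*} [Fintype V] [Fintype B] [Fintype ι]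
    [DecidableEq V] [DecidableEq B]
    (ω : X → Matrix V V ℂ) (σ : ι → X → Matrix B B ℂ) : ℝ :=
  sInf {r : ℝ | 0 ≤ r ∧ ∃ (Mb Ms : ι → Matrix (V × B) (V × B) ℂ),
    (∀ a, (Mb a).PosSemidef ∧ Separable (Mb a)) ∧
    (∀ a, (Ms a).PosSemidef ∧ Separable (Ms a)) ∧
    (∀ x, (∑ a, Mb a) = (1 : Matrix V V ℂ) ⊗ₖ
      (∑ a, ptrace₁ (Mb a * (ω x ⊗ₖ (1 : Matrix B B ℂ))))) ∧
    (∀ a x, (((1 + r : ℝ) : ℂ))⁻¹ •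
        (σ a x + ((r : ℝ) : ℂ) • ptrace₁ (Mb a * (ω x ⊗ₖ (1 : Matrix B B ℂ)))) =
      ptrace₁ (Ms a * (ω x ⊗ₖ (1 : Matrix B B ℂ)))) ∧
    (∀ x, (∑ a, Ms a) = (1 : Matrix V V ℂ) ⊗ₖ
      ((((1 + r : ℝ) : ℂ))⁻¹ •
        ((∑ a, σ a x) + ((r : ℝ) : ℂ) •
          ∑ a, ptrace₁ (Mb a * (ω x ⊗ₖ (1 : Matrix B B ℂ))))))}

noncomputable def tauR {V B X ι : Type*} [Fintype V] [Fintype B] [Fintype ι]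
    [DecidableEq V] [DecidableEq B]
    (ω : X → Matrix V V ℂ) (σ : ι → X → Matrix B B ℂ) : ℝ :=
  sInf {r : ℝ | 0 ≤ r ∧ ∃ (p : ι → ℝ) (Ms : ι → Matrix (V × B) (V × B) ℂ),
    (∀ a, 0 ≤ p a) ∧ ((∑ a, p a) = 1) ∧
    (∀ a, (Ms a).PosSemidef ∧ Separable (Ms a)) ∧
    (∀ a x, (((1 + r : ℝ) : ℂ))⁻¹ •
        (σ a x + ((r * p a : ℝ) : ℂ) • ((Fintype.card B : ℂ)⁻¹ • (1 : Matrix B B ℂ))) =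
      ptrace₁ (Ms a * (ω x ⊗ₖ (1 : Matrix B B ℂ)))) ∧
    (∀ x, (∑ a, Ms a) = (1 : Matrix V V ℂ) ⊗ₖ
      ((((1 + r : ℝ) : ℂ))⁻¹ •
        ((∑ a, σ a x) + ((r : ℝ) : ℂ) • ((Fintype.card B : ℂ)⁻¹ • (1 : Matrix B B ℂ)))))}

noncomputable def TW {V B X ι : Type*} [Fintype V] [Fintype B] [Fintype ι]
    [DecidableEq B]
    (ω : X → Matrix V V ℂ) (σ : ι → X → Matrix B B ℂ) : ℝ :=
  sInf {p : ℝ | 0 ≤ p ∧ p ≤ 1 ∧ ∃ (Mt Mb : ι → Matrix (V × B) (V × B) ℂ),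
    (∀ a, (Mb a).PosSemidef ∧ Separable (Mb a)) ∧
    (∀ a, (ptranspose₁ (Mt a)).PosSemidef) ∧
    (∀ x x', (∑ a, ptrace₁ (Mt a * (ω x ⊗ₖ (1 : Matrix B B ℂ)))) =
      ∑ a, ptrace₁ (Mt a * (ω x' ⊗ₖ (1 : Matrix B B ℂ)))) ∧
    (∀ a x, σ a x = ptrace₁
      ((((p : ℝ) : ℂ) • Mt a + (((1 - p : ℝ)) : ℂ) • Mb a) * (ω x ⊗ₖ (1 : Matrix B B ℂ))))}

/-!
The channel operator `chanOp M ρ = tr_A[(M ⊗ 1)(1 ⊗ ρ)]` turns teleportation with shared state `ρ`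
into a measurement on `V ⊗ B`: `teleA M ρ ω = tr_V[chanOp M ρ (ω ⊗ 1)]`. It sends `τ ⊗ χ` to
`tr_A[M (1 ⊗ τ)] ⊗ χ`, hence preserves separability when `M` is positive semidefinite. So if the
mixture `ρ' = (ρ + r ρₛ) / (1 + r)` is separable, then the same measurement `M` on the noise state
`ρₛ` together with `M*ₐ = chanOp Mₐ ρ'` is feasible for the teleportation robustness with the
same `r`. Feasible values of `r` for the entanglement robustness exist because a Hermitian matrix
can be mixed with a state into a multiple of the identity.
-/

section PartialTrace

variable {V A B : Type*}

theorem ptrace₁_add [Fintype V] (M M' : Matrix (V × B) (V × B) ℂ) :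
    ptrace₁ (M + M') = ptrace₁ M + ptrace₁ M' := by
  ext b b'
  simp [ptrace₁, Finset.sum_add_distrib]

theorem ptrace₁_smul [Fintype V] (c : ℂ) (M : Matrix (V × B) (V × B) ℂ) :
    ptrace₁ (c • M) = c • ptrace₁ M := by
  ext b b'
  simp [ptrace₁, Finset.mul_sum]

theorem ptrace₁_kronecker [Fintype V] (ω : Matrix V V ℂ) (χ : Matrix B B ℂ) :
    ptrace₁ (ω ⊗ₖ χ) = ω.trace • χ := by
  ext b b'
  simp [ptrace₁, trace, Finset.sum_mul]

theorem ptrace₂_posSemidef [Fintype B] {M : Matrix (V × B) (V × B) ℂ} (hM : M.PosSemidef) :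
    (ptrace₂ M).PosSemidef := by
  have hsum : ptrace₂ M = ∑ b, M.submatrix (·, b) (·, b) := by
    ext v v'
    simp [ptrace₂, Matrix.sum_apply]
  rw [hsum]
  exact posSemidef_sum _ fun b _ => hM.submatrix _

theorem ptrace₂_mul_one_kronecker_comm [Fintype V] [Fintype B] [DecidableEq V]
    (M : Matrix (V × B) (V × B) ℂ) (N : Matrix B B ℂ) :
    ptrace₂ (M * ((1 : Matrix V V ℂ) ⊗ₖ N)) = ptrace₂ (((1 : Matrix V V ℂ) ⊗ₖ N) * M) := by
  ext v v'
  simp only [ptrace₂, of_apply, mul_apply, Fintype.sum_prod_type, kroneckerMap_apply, one_apply,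
    ite_mul, one_mul, zero_mul, mul_ite, mul_zero, Finset.sum_comm (γ := V), Finset.sum_ite_eq,
    Finset.sum_ite_eq', Finset.mem_univ, if_true]
  rw [Finset.sum_comm]
  simp only [mul_comm]

theorem ptraceMid_add [Fintype A] (N N' : Matrix (V × A × B) (V × A × B) ℂ) :
    ptraceMid (N + N') = ptraceMid N + ptraceMid N' := by
  ext p q
  simp [ptraceMid, Finset.sum_add_distrib]

theorem ptraceMid_kronecker [Fintype A] (ω : Matrix V V ℂ) (ρ : Matrix (A × B) (A × B) ℂ) :
    ptraceMid (ω ⊗ₖ ρ) = ω ⊗ₖ ptrace₁ ρ := by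
  ext p q
  simp [ptraceMid, ptrace₁, Finset.mul_sum]

theorem ptraceMid_reindex_prodAssoc_kronecker [Fintype A] (N : Matrix (V × A) (V × A) ℂ)
    (χ : Matrix B B ℂ) :
    ptraceMid (reindex (Equiv.prodAssoc V A B) (Equiv.prodAssoc V A B) (N ⊗ₖ χ)) =
      ptrace₂ N ⊗ₖ χ := by
  ext p q
  simp [ptraceMid, ptrace₂, Finset.sum_mul]

theorem ptraceMid_mul_kronecker_one [Fintype V] [Fintype A] [Fintype B] [DecidableEq A]
    [DecidableEq B] (N : Matrix (V × A × B) (V × A × B) ℂ) (ω : Matrix V V ℂ) :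
    ptraceMid (N * (ω ⊗ₖ (1 : Matrix (A × B) (A × B) ℂ))) =
      ptraceMid N * (ω ⊗ₖ (1 : Matrix B B ℂ)) := by
  ext ⟨v, b⟩ ⟨v', b'⟩
  simp only [ptraceMid, of_apply, mul_apply, Fintype.sum_prod_type, kroneckerMap_apply, one_apply,
    mul_ite, mul_one, mul_zero, Finset.sum_ite_eq', Finset.mem_univ,
    if_true, Finset.sum_mul]
  exact Finset.sum_comm

theorem ptraceVA_eq_ptrace₁_ptraceMid [Fintype V] [Fintype A]
    (N : Matrix (V × A × B) (V × A × B) ℂ) : ptraceVA N = ptrace₁ (ptraceMid N) :=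
  rfl

theorem ptraceVA_add [Fintype V] [Fintype A] (N N' : Matrix (V × A × B) (V × A × B) ℂ) :
    ptraceVA (N + N') = ptraceVA N + ptraceVA N' := by
  ext b b'
  simp [ptraceVA, Finset.sum_add_distrib]

theorem ptraceVA_smul [Fintype V] [Fintype A] (c : ℂ) (N : Matrix (V × A × B) (V × A × B) ℂ) :
    ptraceVA (c • N) = c • ptraceVA N := by
  ext b b'
  simp [ptraceVA, Finset.mul_sum]

theorem ptraceVA_submatrix {A' : Type*} [Fintype V] [Fintype A] [Fintype A'] (e : A' ≃ A)
    (N : Matrix (V × A × B) (V × A × B) ℂ) :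
    ptraceVA (N.submatrix (Prod.map id (Prod.map e id)) (Prod.map id (Prod.map e id))) =
      ptraceVA N := by
  ext b b'
  exact Finset.sum_congr rfl fun v _ => e.sum_comp fun a => N (v, a, b) (v, a, b')

end PartialTrace

section ChannelOperator

variable {V A B ι : Type*} [Fintype V] [Fintype A] [Fintype B]

open scoped MatrixOrder Matrix.Norms.L2Operator in
theorem margOp_posSemidef [DecidableEq V] {M : Matrix (V × A) (V × A) ℂ} {τ : Matrix A A ℂ}
    (hM : M.PosSemidef) (hτ : τ.PosSemidef) : (margOp M τ).PosSemidef := by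
  classical
  obtain ⟨Y, rfl⟩ : ∃ Y : Matrix A A ℂ, τ = Yᴴ * Y :=
    CStarAlgebra.nonneg_iff_eq_star_mul_self.1 hτ.nonneg
  -- Moving `1 ⊗ Y` across `tr_A` turns `tr_A[M (1 ⊗ YᴴY)]` into `tr_A[(1 ⊗ Y) M (1 ⊗ Y)ᴴ]`.
  have hfactor : (1 : Matrix V V ℂ) ⊗ₖ (Yᴴ * Y) = ((1 : Matrix V V ℂ) ⊗ₖ Y)ᴴ * (1 ⊗ₖ Y) := by
    rw [conjTranspose_kronecker, conjTranspose_one, ← mul_kronecker_mul, one_mul]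
  rw [margOp, hfactor, ← Matrix.mul_assoc, ptrace₂_mul_one_kronecker_comm, ← Matrix.mul_assoc]
  exact ptrace₂_posSemidef (hM.mul_mul_conjTranspose_same _)

theorem chanOp_kronecker [DecidableEq V] [DecidableEq B] (M : Matrix (V × A) (V × A) ℂ)
    (τ : Matrix A A ℂ) (χ : Matrix B B ℂ) : chanOp M (τ ⊗ₖ χ) = margOp M τ ⊗ₖ χ := by
  rw [chanOp, ← kronecker_assoc, reindex_apply, reindex_apply, submatrix_mul_equiv,
    ← mul_kronecker_mul, Matrix.one_mul, ← reindex_apply, ptraceMid_reindex_prodAssoc_kronecker,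
    margOp]

theorem chanOp_one [DecidableEq V] [DecidableEq A] [DecidableEq B]
    (ρ : Matrix (A × B) (A × B) ℂ) :
    chanOp (1 : Matrix (V × A) (V × A) ℂ) ρ = (1 : Matrix V V ℂ) ⊗ₖ ptrace₁ ρ := by
  rw [chanOp, one_kronecker_one, reindex_apply, submatrix_one_equiv, Matrix.one_mul,
    ptraceMid_kronecker]

theorem chanOp_add_left [DecidableEq V] [DecidableEq B] (M M' : Matrix (V × A) (V × A) ℂ)
    (ρ : Matrix (A × B) (A × B) ℂ) : chanOp (M + M') ρ = chanOp M ρ + chanOp M' ρ := by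
  simp [chanOp, add_kronecker, submatrix_add, Matrix.add_mul, ptraceMid_add]

theorem chanOp_add_right [DecidableEq V] [DecidableEq B] (M : Matrix (V × A) (V × A) ℂ)
    (ρ ρ' : Matrix (A × B) (A × B) ℂ) : chanOp M (ρ + ρ') = chanOp M ρ + chanOp M ρ' := by
  simp [chanOp, kronecker_add, Matrix.mul_add, ptraceMid_add]

theorem chanOp_sum_kronecker [DecidableEq V] [DecidableEq B] (s : Finset ι)
    (M : Matrix (V × A) (V × A) ℂ) (τ : ι → Matrix A A ℂ) (χ : ι → Matrix B B ℂ) :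
    chanOp M (∑ i ∈ s, τ i ⊗ₖ χ i) = ∑ i ∈ s, margOp M (τ i) ⊗ₖ χ i := by
  simpa only [AddMonoidHom.mk'_apply, chanOp_kronecker] using
    map_sum (AddMonoidHom.mk' (chanOp M) (chanOp_add_right M)) (fun i => τ i ⊗ₖ χ i) s

theorem sum_chanOp_of_sum_eq_one [Fintype ι] [DecidableEq V] [DecidableEq A] [DecidableEq B]
    {M : ι → Matrix (V × A) (V × A) ℂ} (hM : ∑ a, M a = 1) (ρ : Matrix (A × B) (A × B) ℂ) :
    ∑ a, chanOp (M a) ρ = (1 : Matrix V V ℂ) ⊗ₖ ptrace₁ ρ := by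
  rw [← chanOp_one, ← hM]
  exact (map_sum (AddMonoidHom.mk' (chanOp · ρ) (chanOp_add_left · · ρ)) M Finset.univ).symm

theorem ptrace₁_chanOp_mul_kronecker_one [DecidableEq V] [DecidableEq B]
    (M : Matrix (V × A) (V × A) ℂ) (ρ : Matrix (A × B) (A × B) ℂ) (ω : Matrix V V ℂ) :
    ptrace₁ (chanOp M ρ * (ω ⊗ₖ (1 : Matrix B B ℂ))) = teleA M ρ ω := by
  classical
  rw [chanOp, ← ptraceMid_mul_kronecker_one, ← ptraceVA_eq_ptrace₁_ptraceMid, Matrix.mul_assoc,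
    ← mul_kronecker_mul, Matrix.one_mul, Matrix.mul_one, teleA]

end ChannelOperator

section Teleportation

variable {V A B ι : Type*} [Fintype V] [Fintype A] [Fintype B] [DecidableEq B]

theorem teleA_add_left (M M' : Matrix (V × A) (V × A) ℂ) (ρ : Matrix (A × B) (A × B) ℂ)
    (ω : Matrix V V ℂ) : teleA (M + M') ρ ω = teleA M ρ ω + teleA M' ρ ω := by
  simp [teleA, add_kronecker, submatrix_add, Matrix.add_mul, ptraceVA_add]

theorem teleA_add_right (M : Matrix (V × A) (V × A) ℂ) (ρ ρ' : Matrix (A × B) (A × B) ℂ)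
    (ω : Matrix V V ℂ) : teleA M (ρ + ρ') ω = teleA M ρ ω + teleA M ρ' ω := by
  simp [teleA, kronecker_add, Matrix.mul_add, ptraceVA_add]

theorem teleA_smul_right (c : ℂ) (M : Matrix (V × A) (V × A) ℂ) (ρ : Matrix (A × B) (A × B) ℂ)
    (ω : Matrix V V ℂ) : teleA M (c • ρ) ω = c • teleA M ρ ω := by
  simp [teleA, kronecker_smul, ptraceVA_smul]

theorem teleA_one [DecidableEq V] [DecidableEq A] (ρ : Matrix (A × B) (A × B) ℂ)
    (ω : Matrix V V ℂ) : teleA 1 ρ ω = ω.trace • ptrace₁ ρ := by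
  rw [← ptrace₁_chanOp_mul_kronecker_one, chanOp_one, ← mul_kronecker_mul, Matrix.one_mul,
    Matrix.mul_one, ptrace₁_kronecker]

theorem sum_teleA_of_sum_eq_one [Fintype ι] [DecidableEq V] [DecidableEq A]
    {M : ι → Matrix (V × A) (V × A) ℂ} (hM : ∑ a, M a = 1) (ρ : Matrix (A × B) (A × B) ℂ)
    (ω : Matrix V V ℂ) : ∑ a, teleA (M a) ρ ω = ω.trace • ptrace₁ ρ := by
  rw [← teleA_one, ← hM]
  exact (map_sum (AddMonoidHom.mk' (teleA · ρ ω) (teleA_add_left · · ρ ω)) M Finset.univ).symm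

theorem teleA_submatrix {A' : Type*} [Fintype A'] (e : A' ≃ A) (M : Matrix (V × A) (V × A) ℂ)
    (ρ : Matrix (A × B) (A × B) ℂ) (ω : Matrix V V ℂ) :
    teleA (M.submatrix (Prod.map id e) (Prod.map id e))
      (ρ.submatrix (Prod.map e id) (Prod.map e id)) ω = teleA M ρ ω := by
  let f : V × A' × B ≃ V × A × B := (Equiv.refl V).prodCongr (e.prodCongr (Equiv.refl B))
  have hM : reindex (Equiv.prodAssoc V A' B) (Equiv.prodAssoc V A' B)
      (M.submatrix (Prod.map id e) (Prod.map id e) ⊗ₖ (1 : Matrix B B ℂ)) =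
      (reindex (Equiv.prodAssoc V A B) (Equiv.prodAssoc V A B)
        (M ⊗ₖ (1 : Matrix B B ℂ))).submatrix f f := rfl
  have hρ : ω ⊗ₖ ρ.submatrix (Prod.map e id) (Prod.map e id) = (ω ⊗ₖ ρ).submatrix f f := rfl
  rw [teleA, hM, hρ, submatrix_mul_equiv]
  exact ptraceVA_submatrix e _

end Teleportation

section State

variable {n m : Type*} [Fintype n] [Fintype m]

theorem IsState.nonempty {ρ : Matrix n n ℂ} (hρ : IsState ρ) : Nonempty n := by
  by_contra hn
  rw [not_nonempty_iff] at hn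
  simpa using hρ.2

theorem IsState.submatrix_equiv {ρ : Matrix n n ℂ} (hρ : IsState ρ) (e : m ≃ n) :
    IsState (ρ.submatrix e e) :=
  ⟨hρ.1.submatrix e, (e.sum_comp fun i => ρ i i).trans hρ.2⟩

theorem isState_inv_trace_smul {P : Matrix n n ℂ} (hP : P.PosSemidef) (htr : P.trace ≠ 0) :
    IsState (P.trace⁻¹ • P) :=
  ⟨hP.smul (inv_nonneg.2 hP.trace_nonneg), by
    rw [trace_smul, smul_eq_mul, inv_mul_cancel₀ htr]⟩

open scoped MatrixOrder Matrix.Norms.L2Operator in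
theorem exists_isState_add_smul_eq_smul_one [Nonempty n] [DecidableEq n] {H : Matrix n n ℂ}
    (hH : H.IsHermitian) :
    ∃ r : ℝ, 0 ≤ r ∧ ∃ ρs, IsState ρs ∧ ∃ c : ℂ, 0 ≤ c ∧ H + (r : ℂ) • ρs = c • 1 := by
  have hle : (((‖H‖ : ℝ) : ℂ) • (1 : Matrix n n ℂ) - H).PosSemidef := by
    simpa [Algebra.algebraMap_eq_smul_one] using
      le_iff.1 hH.isSelfAdjoint.le_algebraMap_norm_self
  -- The extra `1` makes `P` positive definite, so that its trace is nonzero and normalises it.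
  set P : Matrix n n ℂ := ((‖H‖ + 1 : ℝ) : ℂ) • 1 - H with hPdef
  have hP : P.PosDef := by
    convert PosDef.one.add_posSemidef hle using 1
    rw [hPdef, Complex.ofReal_add, add_smul, Complex.ofReal_one, one_smul]
    abel
  have htr : ((P.trace.re : ℝ) : ℂ) = P.trace :=
    Complex.ext rfl (Complex.pos_iff.1 hP.trace_pos).2
  refine ⟨P.trace.re, (Complex.pos_iff.1 hP.trace_pos).1.le, P.trace⁻¹ • P,
    isState_inv_trace_smul hP.posSemidef hP.trace_pos.ne', (‖H‖ + 1 : ℝ),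
    Complex.zero_le_real.2 (by positivity), ?_⟩
  rw [htr, smul_inv_smul₀ hP.trace_pos.ne', hPdef, add_sub_cancel]

end State

section Separable

variable {V A B : Type*} [Fintype V] [Fintype A] [Fintype B]

theorem separable_one [DecidableEq A] [DecidableEq B] :
    Separable (1 : Matrix (A × B) (A × B) ℂ) :=
  ⟨1, fun _ => 1, fun _ => 1, fun _ => .one, fun _ => .one, by simp⟩

theorem Separable.smul {S : Matrix (A × B) (A × B) ℂ} (hS : Separable S) {c : ℂ} (hc : 0 ≤ c) :
    Separable (c • S) := by
  obtain ⟨n, τ, χ, hτ, hχ, rfl⟩ := hS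
  exact ⟨n, fun i => c • τ i, χ, fun i => (hτ i).smul hc, hχ, by
    simp only [Finset.smul_sum, smul_kronecker]⟩

theorem Separable.posSemidef {S : Matrix (A × B) (A × B) ℂ} (hS : Separable S) :
    S.PosSemidef := by
  obtain ⟨n, τ, χ, hτ, hχ, rfl⟩ := hS
  exact posSemidef_sum _ fun i _ => (hτ i).kronecker (hχ i)

theorem Separable.chanOp [DecidableEq V] [DecidableEq B] {M : Matrix (V × A) (V × A) ℂ}
    {ρ : Matrix (A × B) (A × B) ℂ} (hρ : Separable ρ) (hM : M.PosSemidef) :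
    Separable (chanOp M ρ) := by
  obtain ⟨n, τ, χ, hτ, hχ, rfl⟩ := hρ
  exact ⟨n, fun i => margOp M (τ i), χ, fun i => margOp_posSemidef hM (hτ i), hχ,
    chanOp_sum_kronecker _ M τ χ⟩

end Separable

section Robustness

variable {V A B ι X : Type*} [Fintype V] [Fintype A] [Fintype B] [Fintype ι]

theorem epsGen_feasibleSet_nonempty [Nonempty (A × B)] {ρ : Matrix (A × B) (A × B) ℂ}
    (hρ : ρ.IsHermitian) :
    {r : ℝ | 0 ≤ r ∧ ∃ ρs : Matrix (A × B) (A × B) ℂ, IsState ρs ∧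
      Separable ((((1 + r : ℝ) : ℂ))⁻¹ • (ρ + ((r : ℝ) : ℂ) • ρs))}.Nonempty := by
  classical
  obtain ⟨r, hr, ρs, hρs, c, hc, hmix⟩ := exists_isState_add_smul_eq_smul_one hρ
  have hr' : (0 : ℂ) ≤ ((1 + r : ℝ) : ℂ)⁻¹ := inv_nonneg.2 (Complex.zero_le_real.2 (by positivity))
  exact ⟨r, hr, ρs, hρs, hmix ▸ (separable_one.smul hc).smul hr'⟩

variable [DecidableEq V] [DecidableEq A] [DecidableEq B]

theorem tauGen_le {r : ℝ} (hr : 0 ≤ r) {ω : X → Matrix V V ℂ} {σ : ι → X → Matrix B B ℂ}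
    {ρs : Matrix (A × B) (A × B) ℂ} {N : ι → Matrix (V × A) (V × A) ℂ}
    {S : ι → Matrix (V × B) (V × B) ℂ} (hρs : IsState ρs) (hN : ∀ a, (N a).PosSemidef)
    (hNsum : ∑ a, N a = 1) (hS : ∀ a, Separable (S a))
    (hmix : ∀ a x, ((1 + r : ℝ) : ℂ)⁻¹ • (σ a x + (r : ℂ) • teleA (N a) ρs (ω x)) =
      ptrace₁ (S a * (ω x ⊗ₖ (1 : Matrix B B ℂ))))
    (hSsum : ∀ x, ∑ a, S a = (1 : Matrix V V ℂ) ⊗ₖ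
      (((1 + r : ℝ) : ℂ)⁻¹ • ((∑ a, σ a x) + (r : ℂ) • ∑ a, teleA (N a) ρs (ω x)))) :
    tauGen ω σ ≤ r := by
  -- `tauGen` only quantifies over ancillas of type `Fin m`, so `A` has to be relabelled.
  let e : Fin (Fintype.card A) ≃ A := (Fintype.equivFin A).symm
  have hNsum' : ∑ a, (N a).submatrix (Prod.map id e) (Prod.map id e) = 1 := by
    have hsum := map_sum (reindexLinearEquiv ℂ ℂ ((Equiv.refl V).prodCongr e.symm)
      ((Equiv.refl V).prodCongr e.symm)) N Finset.univ
    rw [hNsum, reindexLinearEquiv_one] at hsum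
    exact hsum.symm
  refine csInf_le ⟨0, fun _ h => h.1⟩ ⟨hr, Fintype.card A,
    ρs.submatrix (Prod.map e id) (Prod.map e id),
    fun a => (N a).submatrix (Prod.map id e) (Prod.map id e), S,
    hρs.submatrix_equiv (e.prodCongr (Equiv.refl B)), fun a => (hN a).submatrix _, hNsum',
    fun a => ⟨(hS a).posSemidef, hS a⟩, ?_, ?_⟩
  · simpa only [teleA_submatrix] using hmix
  · simpa only [teleA_submatrix] using hSsum

theorem tauGen_le_epsGen_general [Nonempty (A × B)] {ρ : Matrix (A × B) (A × B) ℂ}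
    (hρ : ρ.IsHermitian) {M : ι → Matrix (V × A) (V × A) ℂ} (hM : ∀ a, (M a).PosSemidef)
    (hMsum : ∑ a, M a = 1) {ω : X → Matrix V V ℂ} (hω : ∀ x, (ω x).trace = 1) :
    tauGen ω (fun a x => teleA (M a) ρ (ω x)) ≤ epsGen ρ := by
  refine le_csInf (epsGen_feasibleSet_nonempty hρ) ?_
  rintro r ⟨hr, ρs, hρs, hsep⟩
  refine tauGen_le hr hρs hM hMsum (fun a => hsep.chanOp (hM a)) (fun a x => ?_) fun x => ?_
  · rw [ptrace₁_chanOp_mul_kronecker_one, teleA_smul_right, teleA_add_right, teleA_smul_right]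
  · rw [sum_chanOp_of_sum_eq_one hMsum, sum_teleA_of_sum_eq_one hMsum,
      sum_teleA_of_sum_eq_one hMsum, hω, one_smul, one_smul, ptrace₁_smul, ptrace₁_add,
      ptrace₁_smul]

end Robustness

/-- τ_gen({σ_{a|ω_x}}) ≤ ε_gen(ρ^{AB}). -/
theorem tauGen_le_epsGen {A B ι X : Type*}
    [Fintype A] [Fintype B] [Fintype ι] [DecidableEq A] [DecidableEq B]
    (d : ℕ) (hd : 1 ≤ d)
    (ρ : Matrix (A × B) (A × B) ℂ) (hρ : IsState ρ)
    (M : ι → Matrix (Fin d × A) (Fin d × A) ℂ)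
    (hM : ∀ a, (M a).PosSemidef) (hMsum : (∑ a, M a) = 1)
    (ω : X → Matrix (Fin d) (Fin d) ℂ) (hω : ∀ x, IsState (ω x)) :
    tauGen ω (fun a x => teleA (M a) ρ (ω x)) ≤ epsGen ρ :=
  haveI := hρ.nonempty
  tauGen_le_epsGen_general hρ.1.isHermitian hM hMsum fun x => (hω x).2

end Tele
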